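/- Let k ≥ 7 be an odd integer and let d ≥ 4 be an integer. Then both polynomials H_{d−1}(x) − 2 and H_{d−1}(x) + 2 are irreducible over ℚ[x], where H_{d−1} is the Dickson polynomial with parameter k−1. -/

import Mathlib

open Polynomial SimpleGraph

/-- Dickson polynomials of the second kind with parameter `k - 1`:
`H 0 = 1`, `H 1 = X`, `H (i+2) = X * H (i+1) - (k-1) * H i`. -/
noncomputable def dicksonH (k : ℕ) : ℕ → Polynomial ℤ
  | 0 => 1
  | 1 => Polynomial.X
  | n + 2 => Polynomial.X * dicksonH k (n + 1) - Polynomial.C ((k : ℤ) - 1) * dicksonH k n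

/-!
Modulo the parameter `a`, the recurrence for the Dickson polynomials `D n` reads
`D (n + 2) = X * D (n + 1)`, so `D n` reduces to `X ^ n` for `1 ≤ n`. Passing from `D n` to
`D (n + 2)` multiplies the constant coefficient by `-a`, and `D 1 = X`, so `a ^ 2` divides that
coefficient as soon as `3 ≤ n`. Hence, if `a` lies in a prime ideal `P` and `c ∈ P \ P ^ 2`, then
`D n + c` is Eisenstein at `P`, and Gauss's lemma passes irreducibility to the fraction field.
-/

section Dickson

variable {R : Type*} [CommRing R] (m : ℕ) (a : R)

theorem natDegree_dickson_le (n : ℕ) : (dickson m a n).natDegree ≤ n := by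
  induction n using Nat.twoStepInduction with
  | zero => exact (natDegree_sub_le _ _).trans (by simp)
  | one => exact natDegree_X_le
  | more n ih ih' =>
    rw [dickson_add_two]
    refine (natDegree_sub_le_of_le (m := n + 2) (n := n) ?_ ?_).trans (by simp)
    · exact (natDegree_mul_le_of_le natDegree_X_le ih').trans (by lia)
    · exact (natDegree_C_mul_le _ _).trans ih

theorem coeff_dickson_self {n : ℕ} (hn : n ≠ 0) : (dickson m a n).coeff n = 1 := by
  induction n using Nat.twoStepInduction with
  | zero => contradiction
  | one => exact coeff_X_one
  | more n _ ih' =>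
    have hlower : (dickson m a n).coeff (n + 2) = 0 :=
      coeff_eq_zero_of_natDegree_lt ((natDegree_dickson_le m a n).trans_lt (by lia))
    rw [dickson_add_two, coeff_sub, coeff_X_mul, coeff_C_mul, hlower, mul_zero, sub_zero,
      ih' n.succ_ne_zero]

theorem natDegree_dickson [Nontrivial R] {n : ℕ} (hn : n ≠ 0) : (dickson m a n).natDegree = n :=
  natDegree_eq_of_le_of_coeff_ne_zero (natDegree_dickson_le m a n)
    (coeff_dickson_self m a hn ▸ one_ne_zero)

theorem monic_dickson_add_C {n : ℕ} (hn : n ≠ 0) (c : R) : (dickson m a n + C c).Monic := by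
  refine monic_of_natDegree_le_of_coeff_eq_one n ?_ ?_
  · simpa using natDegree_dickson_le m a n
  · rw [coeff_add, coeff_dickson_self m a hn, coeff_C_of_ne_zero hn, add_zero]

theorem dickson_zero_right {n : ℕ} (hn : n ≠ 0) : dickson m (0 : R) n = X ^ n := by
  induction n using Nat.twoStepInduction with
  | zero => contradiction
  | one => rw [dickson_one, pow_one]
  | more n _ ih' =>
    rw [dickson_add_two, ih' n.succ_ne_zero, C_0, zero_mul, sub_zero, ← pow_succ']

variable {a} in
theorem coeff_dickson_mem {P : Ideal R} (ha : a ∈ P) {n i : ℕ} (hi : i < n) :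
    (dickson m a n).coeff i ∈ P := by
  have hmap : (dickson m a n).map (Ideal.Quotient.mk P) = X ^ n := by
    rw [map_dickson, Ideal.Quotient.eq_zero_iff_mem.mpr ha, dickson_zero_right m (by lia)]
  rw [← Ideal.Quotient.eq_zero_iff_mem, ← coeff_map, hmap, coeff_X_pow, if_neg hi.ne]

theorem coeff_zero_dickson_add_two (n : ℕ) :
    (dickson m a (n + 2)).coeff 0 = -a * (dickson m a n).coeff 0 := by
  simp

theorem sq_dvd_coeff_zero_dickson {n : ℕ} (hn : 3 ≤ n) : a ^ 2 ∣ (dickson m a n).coeff 0 := by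
  obtain rfl | hn := hn.eq_or_lt
  · rw [coeff_zero_dickson_add_two, dickson_one, coeff_X_zero, mul_zero]
    exact dvd_zero _
  · obtain ⟨n, rfl⟩ := Nat.exists_eq_add_of_le' hn
    rw [coeff_zero_dickson_add_two, coeff_zero_dickson_add_two]
    exact ⟨(dickson m a n).coeff 0, by ring⟩

variable {a}

theorem isEisensteinAt_dickson_add_C {P : Ideal R} {c : R} (ha : a ∈ P) (hc : c ∈ P)
    (hc' : c ∉ P ^ 2) {n : ℕ} (hn : 3 ≤ n) : (dickson m a n + C c).IsEisensteinAt P := by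
  have hP : P ≠ ⊤ := by
    rintro rfl
    rw [Ideal.top_pow] at hc'
    exact hc' Submodule.mem_top
  refine (monic_dickson_add_C m a (by lia) c).isEisensteinAt_of_mem_of_notMem hP ?_ ?_
  · intro i hi
    have hin : i < n := by
      rw [natDegree_add_C] at hi
      exact hi.trans_le (natDegree_dickson_le m a n)
    rw [coeff_add, coeff_C]
    exact P.add_mem (coeff_dickson_mem m ha hin) (by split_ifs <;> simp [hc])
  · have hcoeff : (dickson m a n).coeff 0 ∈ P ^ 2 :=
      (P ^ 2).mem_of_dvd (sq_dvd_coeff_zero_dickson m a hn) (Ideal.pow_mem_pow ha 2)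
    rwa [coeff_add, coeff_C_zero, Ideal.add_mem_iff_right _ hcoeff]

theorem irreducible_map_dickson_add_C [IsDomain R] [IsIntegrallyClosed R] (K : Type*) [Field K]
    [Algebra R K] [IsFractionRing R K] {P : Ideal R} (hP : P.IsPrime) {c : R} (ha : a ∈ P)
    (hc : c ∈ P) (hc' : c ∉ P ^ 2) {n : ℕ} (hn : 3 ≤ n) :
    Irreducible ((dickson m a n + C c).map (algebraMap R K)) := by
  have hmonic : (dickson m a n + C c).Monic := monic_dickson_add_C m a (by lia) c
  have hdeg : 0 < (dickson m a n + C c).natDegree := by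
    rw [natDegree_add_C, natDegree_dickson m a (by lia)]
    lia
  exact hmonic.irreducible_iff_irreducible_map_fraction_map.mp
    ((isEisensteinAt_dickson_add_C m ha hc hc' hn).irreducible hP hmonic.isPrimitive hdeg)

end Dickson

theorem dicksonH_eq_dickson (k n : ℕ) : dicksonH k n = dickson 2 ((k : ℤ) - 1) n := by
  induction n using Nat.twoStepInduction with
  | zero => norm_num [dicksonH]
  | one => rfl
  | more n ih ih' => rw [dicksonH, dickson_add_two, ih, ih']

theorem dicksonH_pm_two_irreducible_general {k n : ℕ} {p c : ℤ} (hp : Prime p)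
    (hpk : p ∣ (k : ℤ) - 1) (hpc : p ∣ c) (hpc' : ¬p ^ 2 ∣ c) (hn : 3 ≤ n) :
    Irreducible ((dicksonH k n + C c).map (Int.castRingHom ℚ)) := by
  rw [dicksonH_eq_dickson]
  refine irreducible_map_dickson_add_C 2 ℚ ((Ideal.span_singleton_prime hp.ne_zero).mpr hp)
    (Ideal.mem_span_singleton.mpr hpk) (Ideal.mem_span_singleton.mpr hpc) ?_ hn
  rwa [Ideal.span_singleton_pow, Ideal.mem_span_singleton]

/-- For odd `k ≥ 7` and `d ≥ 4`, both `H_{d-1}(x) - 2` and `H_{d-1}(x) + 2` are irreducible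
over `ℚ[x]`. -/
theorem dicksonH_pm_two_irreducible (k d : ℕ) (hk : 7 ≤ k) (hkodd : Odd k) (hd : 4 ≤ d) :
    Irreducible ((dicksonH k (d - 1) - 2).map (Int.castRingHom ℚ)) ∧
    Irreducible ((dicksonH k (d - 1) + 2).map (Int.castRingHom ℚ)) := by
  have h {c : ℤ} := dicksonH_pm_two_irreducible_general (c := c) (n := d - 1) Int.prime_two
    (by grind : 2 ∣ (k : ℤ) - 1)
  exact ⟨by simpa [sub_eq_add_neg] using h (c := -2) (by simp) (by decide) (by lia),
    h (c := 2) (by simp) (by decide) (by lia)⟩
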